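/- Let n ≥ 2, let f : ℂⁿ → ℂ be holomorphic (entire), and let p ∈ ℂⁿ with f(p) ≠ 0. Let X be a holomorphic map from an open neighborhood of p in ℂⁿ to ℂⁿ with X(p) ≠ 0 and df(p)(X(p)) = 0. Let ε > 0 and let Z : B(0,ε) ⊆ ℂ → ℂⁿ be holomorphic with Z(0) = p, Z′(T) = X(Z(T)) for all T ∈ B(0,ε), with Z taking values in the domain of X and with f(Z(T)) ≠ 0 for all T ∈ B(0,ε). Define h : B(0,ε) → ℝ by h(T) = (1 + |f(Z(T))|²·u(|f(Z(T))|²)²)·|df(Z(T))(X(Z(T)))|² + ‖X(Z(T))‖². Then h(0)·(∂∂̄h)(0) − (∂h)(0)·(∂̄h)(0) ≥ 0; equivalently, the Gaussian curvature of the conformal metric h(T)|dT|² at T = 0 is ≤ 0. -/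

import Mathlib

open Complex Filter Topology Metric
open scoped ComplexOrder

/-- The function `u(t) = (t-1)/(t log t)` for `t ≠ 1`, extended by `u(1) = 1`. -/
noncomputable def u (t : ℝ) : ℝ := if t = 1 then 1 else (t - 1) / (t * Real.log t)

/-- Wirtinger derivative `∂g` of a complex-valued function on `ℂ` (real-differentiable sense). -/
noncomputable def wdz (g : ℂ → ℂ) (z : ℂ) : ℂ :=
  (fderiv ℝ g z 1 - Complex.I * fderiv ℝ g z Complex.I) / 2

/-- Wirtinger derivative `∂̄g` of a complex-valued function on `ℂ`. -/
noncomputable def wdzbar (g : ℂ → ℂ) (z : ℂ) : ℂ :=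
  (fderiv ℝ g z 1 + Complex.I * fderiv ℝ g z Complex.I) / 2

/-- `∂h` for a real-valued `h`. -/
noncomputable def wdzR (h : ℂ → ℝ) : ℂ → ℂ := wdz fun w => (h w : ℂ)

/-- `∂̄h` for a real-valued `h`. -/
noncomputable def wdzbarR (h : ℂ → ℝ) : ℂ → ℂ := wdzbar fun w => (h w : ℂ)

/-- `∂∂̄h` for a real-valued `h`. -/
noncomputable def wlapR (h : ℂ → ℝ) : ℂ → ℂ := wdz (wdzbarR h)

/-- The numerator `h·∂∂̄h − ∂h·∂̄h` of (−1/2 times) the Gaussian curvature of `h|dz|²`. -/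
noncomputable def curvNum (h : ℂ → ℝ) (z : ℂ) : ℂ :=
  (h z : ℂ) * wlapR h z - wdzR h z * wdzbarR h z

/-- The Gaussian curvature `K = −2(h·∂∂̄h − ∂h·∂̄h)/h³` of the conformal metric `h|dz|²`. -/
noncomputable def gaussCurv (h : ℂ → ℝ) (z : ℂ) : ℂ :=
  -2 * curvNum h z / (h z : ℂ) ^ 3

/-!
Put `F = f ∘ Z`. Along the leaf, `df(Z)(X ∘ Z) = F'` and `X ∘ Z = Z'` are holomorphic, so
`h = a |F'|² + ‖Z'‖²` with a positive smooth weight `a`. Since `F'` vanishes at the base point, the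
first derivatives of `a |F'|²` vanish there and its `∂∂̄` is `a |F''|² ≥ 0`, while `‖Z'‖²`
contributes `∂ = ⟪Z', Z''⟫` and `∂∂̄ = ‖Z''‖²`. Hence the curvature numerator equals
`‖Z'‖² (a |F''|² + ‖Z''‖²) - |⟪Z', Z''⟫|²`, which is nonnegative by Cauchy–Schwarz.
-/

section Calculus

theorem eventually_differentiableAt_of_contDiffAt {𝕜 E E' : Type*} [NontriviallyNormedField 𝕜]
    [NormedAddCommGroup E] [NormedSpace 𝕜 E] [NormedAddCommGroup E'] [NormedSpace 𝕜 E']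
    {φ : E → E'} {x : E} {m : WithTop ℕ∞} (hφ : ContDiffAt 𝕜 m φ x) (hm₀ : m ≠ 0)
    (hm : m ≠ (⊤ : ℕ∞)) : ∀ᶠ y in 𝓝 x, DifferentiableAt 𝕜 φ y :=
  (hφ.eventually hm).mono fun _ hy => hy.differentiableAt hm₀

theorem differentiableAt_ofReal_comp {E : Type*} [NormedAddCommGroup E] [NormedSpace ℝ E]
    {φ : E → ℝ} {x : E} (hφ : DifferentiableAt ℝ φ x) :
    DifferentiableAt ℝ (fun y => (φ y : ℂ)) x :=
  ofRealCLM.differentiableAt.comp x hφ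

theorem fderiv_real_apply_eq_smul_deriv {E : Type*} [NormedAddCommGroup E] [NormedSpace ℂ E]
    {Y : ℂ → E} {z : ℂ} (hY : DifferentiableAt ℂ Y z) (v : ℂ) :
    fderiv ℝ Y z v = v • deriv Y z := by
  rw [hY.fderiv_restrictScalars ℝ, ContinuousLinearMap.coe_restrictScalars', fderiv_eq_smul_deriv]

theorem contDiffAt_norm_sq_of_analyticAt {E F : Type*} [NormedAddCommGroup E] [NormedSpace ℂ E]
    [NormedAddCommGroup F] [InnerProductSpace ℂ F] [CompleteSpace F] {Y : E → F} {x : E}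
    {m : WithTop ℕ∞} (hY : AnalyticAt ℂ Y x) :
    ContDiffAt ℝ m (fun y => ‖Y y‖ ^ 2) x :=
  (hY.contDiffAt.restrict_scalars ℝ).norm_sq ℂ

theorem analyticAt_dslope {𝕜 E : Type*} [NontriviallyNormedField 𝕜] [NormedAddCommGroup E]
    [NormedSpace 𝕜 E] {φ : 𝕜 → E} {c x : 𝕜} (hc : AnalyticAt 𝕜 φ c) (hx : AnalyticAt 𝕜 φ x) :
    AnalyticAt 𝕜 (dslope φ c) x := by
  obtain rfl | hne := eq_or_ne x c
  · obtain ⟨q, hq⟩ := hc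
    exact hq.has_fpower_series_dslope_fslope.analyticAt
  · have hslope : AnalyticAt 𝕜 (fun y => (y - c)⁻¹ • (φ y - φ c)) x :=
      ((analyticAt_id.sub analyticAt_const).inv (sub_ne_zero.2 hne)).smul (hx.sub analyticAt_const)
    exact hslope.congr (dslope_eventuallyEq_slope_of_ne φ hne).symm

end Calculus

section Wirtinger

variable {F : Type*} [NormedAddCommGroup F] [InnerProductSpace ℂ F] {z : ℂ}

section ComplexValued

variable {g k : ℂ → ℂ}

theorem wdz_congr (h : g =ᶠ[𝓝 z] k) : wdz g z = wdz k z := by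
  simp only [wdz, h.fderiv_eq]

theorem wdz_add (hg : DifferentiableAt ℝ g z) (hk : DifferentiableAt ℝ k z) :
    wdz (fun w => g w + k w) z = wdz g z + wdz k z := by
  simp only [wdz, fderiv_fun_add hg hk, add_apply]
  ring

theorem wdzbar_add (hg : DifferentiableAt ℝ g z) (hk : DifferentiableAt ℝ k z) :
    wdzbar (fun w => g w + k w) z = wdzbar g z + wdzbar k z := by
  simp only [wdzbar, fderiv_fun_add hg hk, add_apply]
  ring

theorem wdz_mul (hg : DifferentiableAt ℝ g z) (hk : DifferentiableAt ℝ k z) :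
    wdz (fun w => g w * k w) z = wdz g z * k z + g z * wdz k z := by
  simp only [wdz, fderiv_fun_mul hg hk, add_apply, smul_apply, smul_eq_mul]
  ring

theorem wdzbar_mul (hg : DifferentiableAt ℝ g z) (hk : DifferentiableAt ℝ k z) :
    wdzbar (fun w => g w * k w) z = wdzbar g z * k z + g z * wdzbar k z := by
  simp only [wdzbar, fderiv_fun_mul hg hk, add_apply, smul_apply, smul_eq_mul]
  ring

end ComplexValued

section Inner

variable {Y V : ℂ → F}

theorem fderiv_real_inner_apply (hY : DifferentiableAt ℂ Y z) (hV : DifferentiableAt ℂ V z)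
    (v : ℂ) :
    fderiv ℝ (fun w => inner ℂ (Y w) (V w)) z v =
      v * inner ℂ (Y z) (deriv V z) + (starRingEnd ℂ) v * inner ℂ (deriv Y z) (V z) := by
  rw [fderiv_inner_apply ℂ (hY.restrictScalars ℝ) (hV.restrictScalars ℝ),
    fderiv_real_apply_eq_smul_deriv hY, fderiv_real_apply_eq_smul_deriv hV,
    inner_smul_left, inner_smul_right]

theorem wdz_inner (hY : DifferentiableAt ℂ Y z) (hV : DifferentiableAt ℂ V z) :
    wdz (fun w => inner ℂ (Y w) (V w)) z = inner ℂ (Y z) (deriv V z) := by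
  simp only [wdz, fderiv_real_inner_apply hY hV, map_one, conj_I]
  linear_combination
    (inner ℂ (deriv Y z) (V z) - inner ℂ (Y z) (deriv V z)) / 2 * I_mul_I

theorem wdzbar_inner (hY : DifferentiableAt ℂ Y z) (hV : DifferentiableAt ℂ V z) :
    wdzbar (fun w => inner ℂ (Y w) (V w)) z = inner ℂ (deriv Y z) (V z) := by
  simp only [wdzbar, fderiv_real_inner_apply hY hV, map_one, conj_I]
  linear_combination
    (inner ℂ (Y z) (deriv V z) - inner ℂ (deriv Y z) (V z)) / 2 * I_mul_I

end Inner

section RealValued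

variable {h k : ℂ → ℝ}

theorem wdzR_add (hh : DifferentiableAt ℝ h z) (hk : DifferentiableAt ℝ k z) :
    wdzR (fun w => h w + k w) z = wdzR h z + wdzR k z := by
  simpa only [wdzR, ofReal_add] using
    wdz_add (differentiableAt_ofReal_comp hh) (differentiableAt_ofReal_comp hk)

theorem wdzbarR_add (hh : DifferentiableAt ℝ h z) (hk : DifferentiableAt ℝ k z) :
    wdzbarR (fun w => h w + k w) z = wdzbarR h z + wdzbarR k z := by
  simpa only [wdzbarR, ofReal_add] using
    wdzbar_add (differentiableAt_ofReal_comp hh) (differentiableAt_ofReal_comp hk)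

theorem wdzR_mul (hh : DifferentiableAt ℝ h z) (hk : DifferentiableAt ℝ k z) :
    wdzR (fun w => h w * k w) z = wdzR h z * k z + h z * wdzR k z := by
  simpa only [wdzR, ofReal_mul] using
    wdz_mul (differentiableAt_ofReal_comp hh) (differentiableAt_ofReal_comp hk)

theorem wdzbarR_mul (hh : DifferentiableAt ℝ h z) (hk : DifferentiableAt ℝ k z) :
    wdzbarR (fun w => h w * k w) z = wdzbarR h z * k z + h z * wdzbarR k z := by
  simpa only [wdzbarR, ofReal_mul] using
    wdzbar_mul (differentiableAt_ofReal_comp hh) (differentiableAt_ofReal_comp hk)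

theorem differentiableAt_wdzbarR (hh : ContDiffAt ℝ 2 h z) :
    DifferentiableAt ℝ (wdzbarR h) z := by
  have hfderiv : DifferentiableAt ℝ (fderiv ℝ fun w => (h w : ℂ)) z :=
    ((ofRealCLM.contDiff.contDiffAt.comp z hh).fderiv_right (m := 1) (by norm_num)).differentiableAt
      one_ne_zero
  unfold wdzbarR wdzbar
  fun_prop

theorem wlapR_add (hh : ContDiffAt ℝ 2 h z) (hk : ContDiffAt ℝ 2 k z) :
    wlapR (fun w => h w + k w) z = wlapR h z + wlapR k z := by
  have hbar : wdzbarR (fun w => h w + k w) =ᶠ[𝓝 z] fun w => wdzbarR h w + wdzbarR k w := by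
    filter_upwards [eventually_differentiableAt_of_contDiffAt hh two_ne_zero (by simp),
      eventually_differentiableAt_of_contDiffAt hk two_ne_zero (by simp)] with w hhw hkw
    exact wdzbarR_add hhw hkw
  rw [wlapR, wdz_congr hbar, wdz_add (differentiableAt_wdzbarR hh) (differentiableAt_wdzbarR hk)]
  rfl

theorem wlapR_mul (hh : ContDiffAt ℝ 2 h z) (hk : ContDiffAt ℝ 2 k z) :
    wlapR (fun w => h w * k w) z =
      wlapR h z * k z + wdzbarR h z * wdzR k z + wdzR h z * wdzbarR k z + h z * wlapR k z := by
  have hh₁ : DifferentiableAt ℝ (fun w => (h w : ℂ)) z :=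
    differentiableAt_ofReal_comp (hh.differentiableAt two_ne_zero)
  have hk₁ : DifferentiableAt ℝ (fun w => (k w : ℂ)) z :=
    differentiableAt_ofReal_comp (hk.differentiableAt two_ne_zero)
  have hh₂ := differentiableAt_wdzbarR hh
  have hk₂ := differentiableAt_wdzbarR hk
  have hbar : wdzbarR (fun w => h w * k w) =ᶠ[𝓝 z]
      fun w => wdzbarR h w * k w + h w * wdzbarR k w := by
    filter_upwards [eventually_differentiableAt_of_contDiffAt hh two_ne_zero (by simp),
      eventually_differentiableAt_of_contDiffAt hk two_ne_zero (by simp)] with w hhw hkw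
    exact wdzbarR_mul hhw hkw
  rw [wlapR, wdz_congr hbar, wdz_add (hh₂.fun_mul hk₁) (hh₁.fun_mul hk₂), wdz_mul hh₂ hk₁,
    wdz_mul hh₁ hk₂]
  simp only [wlapR, wdzR]
  ring

end RealValued

section NormSq

variable {Y : ℂ → F}

theorem wdzR_norm_sq (hY : DifferentiableAt ℂ Y z) :
    wdzR (fun w => ‖Y w‖ ^ 2) z = inner ℂ (Y z) (deriv Y z) := by
  simpa [wdzR] using wdz_inner hY hY

theorem wdzbarR_norm_sq (hY : DifferentiableAt ℂ Y z) :
    wdzbarR (fun w => ‖Y w‖ ^ 2) z = inner ℂ (deriv Y z) (Y z) := by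
  simpa [wdzbarR] using wdzbar_inner hY hY

theorem wlapR_norm_sq [CompleteSpace F] (hY : AnalyticAt ℂ Y z) :
    wlapR (fun w => ‖Y w‖ ^ 2) z = ‖deriv Y z‖ ^ 2 := by
  have hbar : wdzbarR (fun w => ‖Y w‖ ^ 2) =ᶠ[𝓝 z] fun w => inner ℂ (deriv Y w) (Y w) := by
    filter_upwards [hY.eventually_analyticAt] with w hw using wdzbarR_norm_sq hw.differentiableAt
  rw [wlapR, wdz_congr hbar, wdz_inner hY.deriv.differentiableAt hY.differentiableAt,
    inner_self_eq_norm_sq_to_K]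
  rfl

end NormSq

end Wirtinger

section Curvature

variable {F G : Type*} [NormedAddCommGroup F] [InnerProductSpace ℂ F] [CompleteSpace F]
  [NormedAddCommGroup G] [InnerProductSpace ℂ G] [CompleteSpace G] {z : ℂ}
  {a : ℂ → ℝ} {g : ℂ → G} {Y : ℂ → F}

theorem curvNum_mul_norm_sq_add_norm_sq (ha : ContDiffAt ℝ 2 a z) (hg : AnalyticAt ℂ g z)
    (hY : AnalyticAt ℂ Y z) (hgz : g z = 0) :
    curvNum (fun w => a w * ‖g w‖ ^ 2 + ‖Y w‖ ^ 2) z =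
      ((‖Y z‖ ^ 2 * (a z * ‖deriv g z‖ ^ 2 + ‖deriv Y z‖ ^ 2) -
        ‖inner ℂ (Y z) (deriv Y z)‖ ^ 2 : ℝ) : ℂ) := by
  have hg₂ : ContDiffAt ℝ 2 (fun w => ‖g w‖ ^ 2) z := contDiffAt_norm_sq_of_analyticAt hg
  have hY₂ : ContDiffAt ℝ 2 (fun w => ‖Y w‖ ^ 2) z := contDiffAt_norm_sq_of_analyticAt hY
  have ha₁ := ha.differentiableAt two_ne_zero
  have hg₁ := hg₂.differentiableAt two_ne_zero
  have hY₁ := hY₂.differentiableAt two_ne_zero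
  have hdz : wdzR (fun w => a w * ‖g w‖ ^ 2 + ‖Y w‖ ^ 2) z = inner ℂ (Y z) (deriv Y z) := by
    rw [wdzR_add (ha₁.fun_mul hg₁) hY₁, wdzR_mul ha₁ hg₁, wdzR_norm_sq hg.differentiableAt,
      wdzR_norm_sq hY.differentiableAt]
    simp [hgz]
  have hdzbar : wdzbarR (fun w => a w * ‖g w‖ ^ 2 + ‖Y w‖ ^ 2) z =
      inner ℂ (deriv Y z) (Y z) := by
    rw [wdzbarR_add (ha₁.fun_mul hg₁) hY₁, wdzbarR_mul ha₁ hg₁, wdzbarR_norm_sq hg.differentiableAt,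
      wdzbarR_norm_sq hY.differentiableAt]
    simp [hgz]
  have hlap : wlapR (fun w => a w * ‖g w‖ ^ 2 + ‖Y w‖ ^ 2) z =
      a z * ‖deriv g z‖ ^ 2 + ‖deriv Y z‖ ^ 2 := by
    rw [wlapR_add (ha.mul hg₂) hY₂, wlapR_mul ha hg₂, wdzR_norm_sq hg.differentiableAt,
      wdzbarR_norm_sq hg.differentiableAt, wlapR_norm_sq hg, wlapR_norm_sq hY]
    simp [hgz]
  have hinner : inner ℂ (Y z) (deriv Y z) * inner ℂ (deriv Y z) (Y z) =
      (‖inner ℂ (Y z) (deriv Y z)‖ : ℂ) ^ 2 := by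
    rw [← inner_conj_symm (deriv Y z), mul_conj']
  rw [curvNum, hdz, hdzbar, hlap, hinner]
  simp [hgz]

theorem curvNum_mul_norm_sq_add_norm_sq_nonneg (ha : ContDiffAt ℝ 2 a z) (haz : 0 ≤ a z)
    (hg : AnalyticAt ℂ g z) (hY : AnalyticAt ℂ Y z) (hgz : g z = 0) :
    0 ≤ curvNum (fun w => a w * ‖g w‖ ^ 2 + ‖Y w‖ ^ 2) z := by
  rw [curvNum_mul_norm_sq_add_norm_sq ha hg hY hgz, zero_le_real, sub_nonneg]
  calc ‖inner ℂ (Y z) (deriv Y z)‖ ^ 2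
      ≤ (‖Y z‖ * ‖deriv Y z‖) ^ 2 := by gcongr; exact norm_inner_le_norm _ _
    _ = ‖Y z‖ ^ 2 * ‖deriv Y z‖ ^ 2 := mul_pow ..
    _ ≤ ‖Y z‖ ^ 2 * (a z * ‖deriv g z‖ ^ 2 + ‖deriv Y z‖ ^ 2) := by
      gcongr
      exact le_add_of_nonneg_left (by positivity)

end Curvature

section Weight

theorem u_eq_inv_mul_dslope_log (t : ℝ) : u t = (t * dslope Real.log 1 t)⁻¹ := by
  obtain rfl | ht := eq_or_ne t 1
  · simp [u]
  · rw [u, if_neg ht, dslope_of_ne _ ht, slope_def_field, Real.log_one, sub_zero, ← mul_div_assoc,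
      inv_div]

theorem dslope_log_one_ne_zero {t : ℝ} (ht : 0 < t) : dslope Real.log 1 t ≠ 0 := by
  obtain rfl | ht₁ := eq_or_ne t 1
  · simp
  · rw [dslope_of_ne _ ht₁, slope_def_field, Real.log_one, sub_zero]
    exact div_ne_zero (Real.log_ne_zero_of_pos_of_ne_one ht ht₁) (sub_ne_zero.2 ht₁)

theorem analyticAt_u {t : ℝ} (ht : 0 < t) : AnalyticAt ℝ u t := by
  rw [funext u_eq_inv_mul_dslope_log]
  exact (analyticAt_id.mul (analyticAt_dslope (analyticAt_log one_pos) (analyticAt_log ht))).inv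
    (mul_ne_zero ht.ne' (dslope_log_one_ne_zero ht))

theorem contDiffAt_one_add_mul_u_sq {t : ℝ} (ht : 0 < t) {m : WithTop ℕ∞} :
    ContDiffAt ℝ m (fun t => 1 + t * u t ^ 2) t :=
  contDiffAt_const.add (contDiffAt_id.mul ((analyticAt_u ht).contDiffAt.pow 2))

end Weight

theorem stmt0_general {E : Type*} [NormedAddCommGroup E] [InnerProductSpace ℂ E] [CompleteSpace E]
    {f : E → ℂ} {X : E → E} {Z : ℂ → E} {z : ℂ}
    (hf : ∀ᶠ x in 𝓝 (Z z), DifferentiableAt ℂ f x) (hfz : f (Z z) ≠ 0)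
    (hZ : ∀ᶠ T in 𝓝 z, HasDerivAt Z (X (Z T)) T) (hker : fderiv ℂ f (Z z) (X (Z z)) = 0) :
    0 ≤ curvNum (fun T =>
      (1 + ‖f (Z T)‖ ^ 2 * u (‖f (Z T)‖ ^ 2) ^ 2) *
        ‖fderiv ℂ f (Z T) (X (Z T))‖ ^ 2 + ‖X (Z T)‖ ^ 2) z := by
  have hfZ : ∀ᶠ T in 𝓝 z, HasDerivAt (fun T => f (Z T)) (fderiv ℂ f (Z T) (X (Z T))) T := by
    filter_upwards [hZ.self_of_nhds.continuousAt.eventually hf, hZ] with T hfT hZT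
      using hfT.hasFDerivAt.comp_hasDerivAt T hZT
  have hfZ_an : AnalyticAt ℂ (fun T => f (Z T)) z :=
    analyticAt_iff_eventually_differentiableAt.2 (hfZ.mono fun _ h => h.differentiableAt)
  have hZ_an : AnalyticAt ℂ Z z :=
    analyticAt_iff_eventually_differentiableAt.2 (hZ.mono fun _ h => h.differentiableAt)
  have hg : AnalyticAt ℂ (fun T => fderiv ℂ f (Z T) (X (Z T))) z :=
    hfZ_an.deriv.congr (hfZ.mono fun _ h => h.deriv)
  have hY : AnalyticAt ℂ (fun T => X (Z T)) z :=
    hZ_an.deriv.congr (hZ.mono fun _ h => h.deriv)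
  have hweight : ContDiffAt ℝ 2 (fun T => 1 + ‖f (Z T)‖ ^ 2 * u (‖f (Z T)‖ ^ 2) ^ 2) z :=
    (contDiffAt_one_add_mul_u_sq (by positivity)).comp (f := fun T => ‖f (Z T)‖ ^ 2) z
      (contDiffAt_norm_sq_of_analyticAt hfZ_an)
  exact curvNum_mul_norm_sq_add_norm_sq_nonneg hweight (by positivity) hg hY hker

/-- along a leaf through `p ∉ Z(f)` of a vector field `X` with
`X(p) ∈ Ker df(p)`, the curvature numerator of the pulled-back Grauert-type metric
is nonnegative at `T = 0`, i.e. the Gaussian curvature there is `≤ 0`. -/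
theorem stmt0 (n : ℕ) (hn : 2 ≤ n)
    (f : EuclideanSpace ℂ (Fin n) → ℂ) (hf : Differentiable ℂ f)
    (p : EuclideanSpace ℂ (Fin n)) (hfp : f p ≠ 0)
    (V : Set (EuclideanSpace ℂ (Fin n))) (hV : IsOpen V) (hpV : p ∈ V)
    (X : EuclideanSpace ℂ (Fin n) → EuclideanSpace ℂ (Fin n))
    (hX : DifferentiableOn ℂ X V) (hXp : X p ≠ 0)
    (hker : fderiv ℂ f p (X p) = 0)
    (ε : ℝ) (hε : 0 < ε)
    (Z : ℂ → EuclideanSpace ℂ (Fin n))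
    (hZ : DifferentiableOn ℂ Z (Metric.ball 0 ε))
    (hZ0 : Z 0 = p)
    (hZV : ∀ T ∈ Metric.ball (0 : ℂ) ε, Z T ∈ V)
    (hZ' : ∀ T ∈ Metric.ball (0 : ℂ) ε, deriv Z T = X (Z T))
    (hfZ : ∀ T ∈ Metric.ball (0 : ℂ) ε, f (Z T) ≠ 0) :
    0 ≤ curvNum (fun T =>
      (1 + ‖f (Z T)‖ ^ 2 * u (‖f (Z T)‖ ^ 2) ^ 2) *
        ‖fderiv ℂ f (Z T) (X (Z T))‖ ^ 2 + ‖X (Z T)‖ ^ 2) 0 := by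
  subst hZ0
  have hZ_deriv : ∀ᶠ T in 𝓝 (0 : ℂ), HasDerivAt Z (X (Z T)) T := by
    filter_upwards [ball_mem_nhds 0 hε] with T hT
    exact hZ' T hT ▸ (hZ.differentiableAt (isOpen_ball.mem_nhds hT)).hasDerivAt
  exact stmt0_general (.of_forall hf) hfp hZ_deriv hker
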